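/- Let q be a power of an odd prime. Let A, B₁, B₂, C be multiplicative characters of 𝔽_q^× with A ≠ ε, B₁B₂ ≠ ε, A ≠ C, and B₁B₂ ≠ C. Then for any λ ∈ 𝔽_q, 𝔽_D^{(2)}[A; B₁, B₂; C; λ, λ] = (C·(AB₁B₂)⁻¹)(1−λ) · ₂𝔽₁[C·Ā, C·(B₁B₂)⁻¹; C; λ] + δ(1−λ) · J(A, (AB₁B₂)⁻¹·C) / J(A, CĀ). -/

import Mathlib

open Finset

/-- Jacobi sum `J(A,B) = Σ_x A(x) B(1-x)`. -/
noncomputable def jacobiSum' {F : Type} [Field F] [Fintype F] (A B : MulChar F ℂ) : ℂ :=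
  ∑ x : F, A x * B (1 - x)

/-- One-variable finite-field period function `ℙ_D^{(1)}[A; B; C; λ]`. -/
noncomputable def P1 {F : Type} [Field F] [Fintype F] (A B C : MulChar F ℂ) (l : F) : ℂ :=
  ∑ y : F, A y * (C * A⁻¹) (1 - y) * B⁻¹ (1 - l * y)

/-- Two-variable finite-field Appell–Lauricella period function `ℙ_D^{(2)}`. -/
noncomputable def P2 {F : Type} [Field F] [Fintype F] (A B₁ B₂ C : MulChar F ℂ) (l₁ l₂ : F) : ℂ :=
  ∑ y : F, A y * (C * A⁻¹) (1 - y) * B₁⁻¹ (1 - l₁ * y) * B₂⁻¹ (1 - l₂ * y)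

/-- n-variable finite-field Appell–Lauricella period function `ℙ_D^{(n)}`. -/
noncomputable def PDn {F : Type} [Field F] [Fintype F] (n : ℕ) (A : MulChar F ℂ)
    (B : Fin n → MulChar F ℂ) (C : MulChar F ℂ) (l : Fin n → F) : ℂ :=
  ∑ y : F, A y * (C * A⁻¹) (1 - y) * ∏ i, (B i)⁻¹ (1 - l i * y)

/-- Normalized two-variable Appell–Lauricella function `𝔽_D^{(2)}`. -/
noncomputable def F2 {F : Type} [Field F] [Fintype F] (A B₁ B₂ C : MulChar F ℂ) (l₁ l₂ : F) : ℂ :=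
  P2 A B₁ B₂ C l₁ l₂ / jacobiSum' A (C * A⁻¹)

/-- Normalized n-variable Appell–Lauricella function `𝔽_D^{(n)}`. -/
noncomputable def FDn {F : Type} [Field F] [Fintype F] (n : ℕ) (A : MulChar F ℂ)
    (B : Fin n → MulChar F ℂ) (C : MulChar F ℂ) (l : Fin n → F) : ℂ :=
  PDn n A B C l / jacobiSum' A (C * A⁻¹)

/-- Finite-field Gauss hypergeometric function `₂𝔽₁[A,B;C;λ] = ℙ_D^{(1)}[B;A;C;λ]/J(B,C B̄)`. -/
noncomputable def twoF1 {F : Type} [Field F] [Fintype F] (A B C : MulChar F ℂ) (l : F) : ℂ :=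
  P1 B A C l / jacobiSum' B (C * B⁻¹)

open scoped Classical in
/-- `δ(x) = 1` if `x = 0`, else `0`. -/
noncomputable def deltaC {F : Type} [Field F] [Fintype F] (x : F) : ℂ :=
  if x = 0 then 1 else 0

noncomputable instance {F : Type} [Field F] [Fintype F] : Fintype (MulChar F ℂ) :=
  Fintype.ofFinite _

/-- Character binomial coefficient `(A choose χ) = -χ(-1) J(A, χ̄)`. -/
noncomputable def charBinom {F : Type} [Field F] [Fintype F] (A χ : MulChar F ℂ) : ℂ :=
  -χ (-1) * jacobiSum' A χ⁻¹

/-- Twisted Gauss sum, also valid at `c = 0` for nontrivial characters. -/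
lemma aux_gauss {F : Type} [Field F] [Fintype F] (B : MulChar F ℂ) (hB : B ≠ 1)
    (ψ : AddChar F ℂ) (c : F) :
    ∑ y : F, B y * ψ (c * y) = gaussSum B ψ * B⁻¹ c := by
  by_cases hc : c = 0
  · subst hc
    simp [MulChar.sum_eq_zero_of_ne_one hB, MulChar.map_zero]
  · have h := gaussSum_mulShift_eq B ψ (Units.mk0 c hc)
    rw [Units.val_mk0] at h
    rw [mul_comm, ← h]
    simp [gaussSum, AddChar.mulShift_apply]

/-- Symmetric triple sum. -/
noncomputable def auxH {F : Type} [Field F] [Fintype F] (ψ : AddChar F ℂ)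
    (A B C : MulChar F ℂ) (l : F) : ℂ :=
  ∑ s : F, ∑ x : F, ∑ y : F, A x * B y * C⁻¹ s * ψ (x + y + s + l * x * y / s)

lemma auxH_symm {F : Type} [Field F] [Fintype F] (ψ : AddChar F ℂ)
    (A B C : MulChar F ℂ) (l : F) : auxH ψ A B C l = auxH ψ B A C l := by
  unfold auxH
  refine Finset.sum_congr rfl fun s _ => ?_
  rw [Finset.sum_comm]
  refine Finset.sum_congr rfl fun x _ => Finset.sum_congr rfl fun y _ => ?_
  rw [mul_comm (A y) (B x)]
  congr 2
  ring

lemma auxH_inner {F : Type} [Field F] [Fintype F] (ψ : AddChar F ℂ)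
    (A B C : MulChar F ℂ) (hB : B ≠ 1) (l s : F) :
    ∑ x : F, ∑ y : F, A x * B y * C⁻¹ s * ψ (x + y + s + l * x * y / s) =
      gaussSum B ψ * ∑ v : F, (A v * B⁻¹ (1 + l * v)) * ((A * C⁻¹) s * ψ ((1 + v) * s)) := by
  by_cases hs : s = 0
  · subst hs
    simp [MulChar.map_zero]
  · rw [← Equiv.sum_comp (Equiv.mulLeft₀ s hs), Finset.mul_sum]
    refine Finset.sum_congr rfl fun v _ => ?_
    have e : ∀ y : F, A (s * v) * B y * C⁻¹ s * ψ (s * v + y + s + l * (s * v) * y / s) =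
        (A v * (A * C⁻¹) s * ψ ((1 + v) * s)) * (B y * ψ ((1 + l * v) * y)) := by
      intro y
      have e1 : s * v + y + s + l * (s * v) * y / s = (1 + v) * s + (1 + l * v) * y := by
        field_simp
        ring
      rw [e1, AddChar.map_add_eq_mul, map_mul, MulChar.mul_apply]
      ring
    simp only [Equiv.mulLeft₀_apply]
    rw [Finset.sum_congr rfl fun y _ => e y, ← Finset.mul_sum, aux_gauss B hB]
    ring

lemma auxH_eq {F : Type} [Field F] [Fintype F] (ψ : AddChar F ℂ)
    (A B C : MulChar F ℂ) (hB : B ≠ 1) (hAC : A ≠ C) (l : F) :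
    auxH ψ A B C l = (gaussSum B ψ * gaussSum (A * C⁻¹) ψ * A (-1)) * P1 A B C l := by
  have hAC' : A * C⁻¹ ≠ 1 := by
    rwa [Ne, mul_inv_eq_one]
  unfold auxH P1
  rw [Finset.sum_congr rfl fun s _ => auxH_inner ψ A B C hB l s, ← Finset.mul_sum,
    Finset.sum_comm, mul_assoc, mul_assoc]
  congr 1
  rw [← Equiv.sum_comp (Equiv.neg F), Finset.mul_sum, Finset.mul_sum]
  refine Finset.sum_congr rfl fun v _ => ?_
  rw [← Finset.mul_sum, aux_gauss _ hAC', mul_inv, inv_inv, mul_comm A⁻¹ C]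
  simp only [Equiv.neg_apply]
  rw [neg_eq_neg_one_mul v, map_mul]
  simp only [neg_mul, one_mul, mul_neg, ← sub_eq_add_neg]
  ring

lemma P1_zero {F : Type} [Field F] [Fintype F] (A B C : MulChar F ℂ) :
    P1 A B C 0 = jacobiSum' A (C * A⁻¹) := by
  simp [P1, jacobiSum']

/-- `₂𝔽₁` is symmetric in its two upper parameters. -/
lemma twoF1_symm {F : Type} [Field F] [Fintype F] (A B C : MulChar F ℂ)
    (hA : A ≠ 1) (hB : B ≠ 1) (hAC : A ≠ C) (hBC : B ≠ C) (l : F) :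
    twoF1 B A C l = twoF1 A B C l := by
  have hψ := AddChar.FiniteField.primitiveChar_to_Complex_isPrimitive F
  set ψ := AddChar.FiniteField.primitiveChar_to_Complex F
  have hcard : (Fintype.card F : ℂ) ≠ 0 := by
    exact_mod_cast Fintype.card_ne_zero
  have key : ∀ m : F, (gaussSum B ψ * gaussSum (A * C⁻¹) ψ * A (-1)) * P1 A B C m =
      (gaussSum A ψ * gaussSum (B * C⁻¹) ψ * B (-1)) * P1 B A C m := fun m => by
    rw [← auxH_eq ψ A B C hB hAC, ← auxH_eq ψ B A C hA hBC, auxH_symm]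
  have nz : ∀ X Y : MulChar F ℂ, Y ≠ 1 → X ≠ C →
      gaussSum Y ψ * gaussSum (X * C⁻¹) ψ * X (-1) ≠ 0 := by
    intro X Y hY hX
    have hX' : X * C⁻¹ ≠ 1 := by rwa [Ne, mul_inv_eq_one]
    have hu : X (-1) ≠ 0 := (isUnit_one.neg.map X).ne_zero
    exact mul_ne_zero (mul_ne_zero (gaussSum_ne_zero_of_nontrivial hcard hY hψ)
      (gaussSum_ne_zero_of_nontrivial hcard hX' hψ)) hu
  have h1 := key l
  have h0 := key 0
  rw [P1_zero, P1_zero] at h0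
  unfold twoF1
  rw [← mul_div_mul_left _ _ (nz A B hB hAC), h1, h0, mul_div_mul_left _ _ (nz B A hA hBC)]

/-- Euler transformation of the period function. -/
lemma P1_euler {F : Type} [Field F] [Fintype F] (A B C : MulChar F ℂ) (l : F) (hl : 1 - l ≠ 0) :
    P1 A B C l = (C * (A * B)⁻¹) (1 - l) * P1 (C * A⁻¹) (C * B⁻¹) C l := by
  classical
  have hfil : ∀ A B C : MulChar F ℂ, P1 A B C l =
      ∑ y ∈ Finset.univ.filter (fun y : F => 1 - l * y ≠ 0),
        A y * (C * A⁻¹) (1 - y) * B⁻¹ (1 - l * y) := by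
    intro A B C
    rw [Finset.sum_filter_of_ne]
    · rfl
    · intro y _ h h0
      apply h
      rw [h0, MulChar.map_zero, mul_zero]
  rw [hfil, hfil, Finset.mul_sum]
  have e2 : ∀ y : F, 1 - l * y ≠ 0 →
      1 - l * ((1 - y) / (1 - l * y)) = (1 - l) / (1 - l * y) := by
    intro y hy
    rw [eq_div_iff hy]
    have hc : (1 - y) / (1 - l * y) * (1 - l * y) = 1 - y := div_mul_cancel₀ _ hy
    linear_combination (-l) * hc
  have e1 : ∀ y : F, 1 - l * y ≠ 0 →
      1 - (1 - y) / (1 - l * y) = y * (1 - l) / (1 - l * y) := by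
    intro y hy
    rw [eq_div_iff hy]
    have hc : (1 - y) / (1 - l * y) * (1 - l * y) = 1 - y := div_mul_cancel₀ _ hy
    linear_combination (-1) * hc
  have hmem : ∀ y : F, 1 - l * y ≠ 0 → 1 - l * ((1 - y) / (1 - l * y)) ≠ 0 := by
    intro y hy
    rw [e2 y hy]
    exact div_ne_zero hl hy
  have hinv : ∀ y : F, 1 - l * y ≠ 0 →
      (1 - (1 - y) / (1 - l * y)) / (1 - l * ((1 - y) / (1 - l * y))) = y := by
    intro y hy
    rw [e1 y hy, e2 y hy, div_div_div_cancel_right₀ hy, mul_div_cancel_right₀ _ hl]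
  refine Finset.sum_nbij' (fun y => (1 - y) / (1 - l * y)) (fun y => (1 - y) / (1 - l * y))
    ?_ ?_ ?_ ?_ ?_
  · intro y hy
    simp only [Finset.mem_filter, Finset.mem_univ, true_and] at hy ⊢
    exact hmem y hy
  · intro y hy
    simp only [Finset.mem_filter, Finset.mem_univ, true_and] at hy ⊢
    exact hmem y hy
  · intro y hy
    simp only [Finset.mem_filter, Finset.mem_univ, true_and] at hy
    exact hinv y hy
  · intro y hy
    simp only [Finset.mem_filter, Finset.mem_univ, true_and] at hy
    exact hinv y hy
  · intro y hy
    simp only [Finset.mem_filter, Finset.mem_univ, true_and] at hy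
    rw [e1 y hy, e2 y hy]
    by_cases hy0 : y = 0
    · subst hy0
      simp [MulChar.map_zero]
    by_cases hy1 : 1 - y = 0
    · simp [hy1, MulChar.map_zero]
    have hn : ∀ (X : MulChar F ℂ) (x : F), x ≠ 0 → X x ≠ 0 := fun X x hx =>
      (hx.isUnit.map X).ne_zero
    have hi : ∀ (X : MulChar F ℂ) (x : F), X x⁻¹ = (X x)⁻¹ := fun X x => by
      rw [← MulChar.inv_apply', MulChar.inv_apply_eq_inv']
    simp only [div_eq_mul_inv, map_mul, MulChar.mul_apply, mul_inv, inv_inv,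
      MulChar.inv_apply_eq_inv', hi]
    have a1 := hn A y hy0
    have a2 := hn A _ hy1
    have a3 := hn A _ hy
    have a4 := hn A _ hl
    have b3 := hn B _ hy
    have b4 := hn B _ hl
    have c1 := hn C y hy0
    have c2 := hn C _ hy1
    have c3 := hn C _ hy
    have c4 := hn C _ hl
    clear hinv hmem e1 e2 hfil hn hi
    generalize 1 - l * y = d at *
    field_simp

lemma aux_jacobi_comm {F : Type} [Field F] [Fintype F] (A B : MulChar F ℂ) :
    jacobiSum' A B = jacobiSum' B A := by
  unfold jacobiSum'
  rw [← Equiv.sum_comp (Equiv.subLeft (1 : F))]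
  refine Finset.sum_congr rfl fun x _ => ?_
  simp [mul_comm]

/-- reduction formula for `𝔽_D^{(2)}` when `λ₁ = λ₂`. -/
theorem statement_13 (F : Type) [Field F] [Fintype F] (hq : Odd (Fintype.card F))
    (A B₁ B₂ C : MulChar F ℂ) (hA : A ≠ 1) (hB : B₁ * B₂ ≠ 1)
    (hAC : A ≠ C) (hBC : B₁ * B₂ ≠ C) (l : F) :
    F2 A B₁ B₂ C l l =
      (C * (A * B₁ * B₂)⁻¹) (1 - l) * twoF1 (C * A⁻¹) (C * (B₁ * B₂)⁻¹) C l +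
        deltaC (1 - l) * jacobiSum' A ((A * B₁ * B₂)⁻¹ * C) / jacobiSum' A (C * A⁻¹) := by
  have hP2 : P2 A B₁ B₂ C l l = P1 A (B₁ * B₂) C l := by
    unfold P2 P1
    refine Finset.sum_congr rfl fun y _ => ?_
    rw [mul_inv, MulChar.mul_apply B₁⁻¹, mul_assoc]
  unfold F2
  rw [hP2]
  by_cases hl : 1 - l = 0
  · have hl1 : l = 1 := (sub_eq_zero.mp hl).symm
    subst hl1
    have h : P1 A (B₁ * B₂) C 1 = jacobiSum' A ((A * B₁ * B₂)⁻¹ * C) := by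
      unfold P1 jacobiSum'
      refine Finset.sum_congr rfl fun y _ => ?_
      simp only [one_mul, mul_inv, MulChar.mul_apply]
      ring
    rw [h]
    simp [deltaC, MulChar.map_zero]
  · have h1 : C * A⁻¹ ≠ 1 := by
      rw [Ne, mul_inv_eq_one]
      exact fun h => hAC h.symm
    have h2 : C * (B₁ * B₂)⁻¹ ≠ 1 := by
      rw [Ne, mul_inv_eq_one]
      exact fun h => hBC h.symm
    have h3 : C * A⁻¹ ≠ C := by simpa using hA
    have h4 : C * (B₁ * B₂)⁻¹ ≠ C := by
      rw [Ne, mul_eq_left, inv_eq_one]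
      exact hB
    rw [twoF1_symm _ _ C h2 h1 h4 h3 l, P1_euler A (B₁ * B₂) C l hl]
    have h5 : C * (C * A⁻¹)⁻¹ = A := by
      rw [mul_inv, inv_inv, mul_inv_cancel_left]
    simp only [twoF1, deltaC, if_neg hl, h5, zero_mul, zero_div, add_zero, mul_assoc]
    rw [aux_jacobi_comm A, mul_div_assoc]
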